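/- arXiv:2203.00571 — 2 statements merged into one kernel-verified Lean document; each statement's English description precedes it below -/
import Mathlib

section
/- For every p ∈ [2,∞] there exists a constant C = C(p) > 0, independent of n, τ, ι and a, such that for all integers n ≥ 2, all τ > 0, all integers ι ≥ 1, and all a ∈ ℝ^{n-1}: ‖(I + τ A_n²)^{-ι} a‖_{l^p_n} ≤ C (τ ι)^{-(1/4)(1/2 - 1/p)} ‖a‖_{l²_n}, where 1/∞ := 0 and (I + τ A_n²)^{-ι} is the ι-th power of the inverse of the positive definite matrix I + τ A_n². -/
noncomputable section

open Real Matrix Finset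
open scoped ENNReal

/-- The matrix form `A_n` of the discrete Dirichlet Laplacian with mesh size `h = π/n`:
the `(n-1)×(n-1)` matrix `(n²/π²)·tridiag(1, -2, 1)`. -/
def disLap (n : ℕ) : Matrix (Fin (n - 1)) (Fin (n - 1)) ℝ :=
  Matrix.of fun i j =>
    ((n : ℝ) ^ 2 / Real.pi ^ 2) *
      (if (i : ℕ) = (j : ℕ) then -2
       else if (i : ℕ) + 1 = (j : ℕ) ∨ (j : ℕ) + 1 = (i : ℕ) then 1 else 0)

/-- Discrete `l^p_n` norm `‖a‖ = ((π/n) Σ_{i=1}^{n-1} |a_i|^p)^{1/p}` for `1 ≤ p < ∞`. -/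
def lpn (n : ℕ) (p : ℝ) (a : Fin (n - 1) → ℝ) : ℝ :=
  ((Real.pi / n) * ∑ i, |a i| ^ p) ^ (1 / p)

/-- Discrete `l²_n` norm. -/
def l2n (n : ℕ) (a : Fin (n - 1) → ℝ) : ℝ :=
  Real.sqrt ((Real.pi / n) * ∑ i, (a i) ^ 2)

/-- Discrete `l^∞_n` norm. -/
def linfn (n : ℕ) (a : Fin (n - 1) → ℝ) : ℝ := ⨆ i, |a i|

/-- Discrete `l^p_n` norm for extended `p ∈ [1,∞]`. -/
def lpEn (n : ℕ) (p : ℝ≥0∞) (a : Fin (n - 1) → ℝ) : ℝ :=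
  if p = ⊤ then linfn n a else lpn n p.toReal a

lemma aux_symm (n : ℕ) (u v : Fin (n - 1) → ℝ) :
    (disLap n).mulVec u ⬝ᵥ v = u ⬝ᵥ (disLap n).mulVec v := by
  have h : (disLap n)ᵀ = disLap n := by
    ext i j
    simp only [disLap, Matrix.transpose_apply, Matrix.of_apply]
    congr 1
    by_cases hij : (i : ℕ) = j
    · simp [hij]
    · rw [if_neg hij, if_neg (Ne.symm hij)]
      simp only [or_comm]
  rw [Matrix.dotProduct_mulVec, ← Matrix.mulVec_transpose, h]

lemma aux_nonneg {m : ℕ} (u : Fin m → ℝ) : 0 ≤ u ⬝ᵥ u :=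
  Finset.sum_nonneg fun i _ => mul_self_nonneg _

lemma aux_step (n : ℕ) (τ : ℝ) (hτ : 0 < τ) (u : Fin (n - 1) → ℝ) :
    u ⬝ᵥ u + 2 * τ * ((disLap n).mulVec u ⬝ᵥ (disLap n).mulVec u) ≤
      ((1 : Matrix (Fin (n - 1)) (Fin (n - 1)) ℝ) + τ • (disLap n * disLap n)).mulVec u ⬝ᵥ
      ((1 : Matrix (Fin (n - 1)) (Fin (n - 1)) ℝ) + τ • (disLap n * disLap n)).mulVec u := by
  have e : ((1 : Matrix (Fin (n - 1)) (Fin (n - 1)) ℝ) + τ • (disLap n * disLap n)).mulVec u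
      = u + τ • (disLap n).mulVec ((disLap n).mulVec u) := by
    rw [Matrix.add_mulVec, Matrix.one_mulVec, Matrix.smul_mulVec, Matrix.mulVec_mulVec]
  rw [e]
  have h1 := aux_symm n ((disLap n).mulVec u) u
  have h2 := aux_nonneg ((disLap n).mulVec ((disLap n).mulVec u))
  have h3 := dotProduct_comm u ((disLap n).mulVec ((disLap n).mulVec u))
  simp only [add_dotProduct, dotProduct_add, smul_dotProduct, dotProduct_smul, smul_eq_mul]
  rw [h3, h1]
  nlinarith [mul_nonneg (mul_nonneg hτ.le hτ.le) h2]

lemma aux_pow (n : ℕ) (τ : ℝ) (hτ : 0 < τ) (k : ℕ) : ∀ (u : Fin (n - 1) → ℝ),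
    u ⬝ᵥ u + 2 * τ * k * ((disLap n).mulVec u ⬝ᵥ (disLap n).mulVec u) ≤
      (((1 : Matrix (Fin (n - 1)) (Fin (n - 1)) ℝ) + τ • (disLap n * disLap n)) ^ k).mulVec u ⬝ᵥ
      (((1 : Matrix (Fin (n - 1)) (Fin (n - 1)) ℝ) + τ • (disLap n * disLap n)) ^ k).mulVec u := by
  induction k with
  | zero => intro u; simp
  | succ k ih =>
    intro u
    set M := (1 : Matrix (Fin (n - 1)) (Fin (n - 1)) ℝ) + τ • (disLap n * disLap n) with hM
    have hc : (disLap n).mulVec (M.mulVec u) = M.mulVec ((disLap n).mulVec u) := by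
      rw [Matrix.mulVec_mulVec, Matrix.mulVec_mulVec]
      congr 1
      rw [hM, mul_add, add_mul]
      simp [mul_assoc]
    have h1 := ih (M.mulVec u)
    rw [hc, Matrix.mulVec_mulVec _ (M ^ k) M, ← pow_succ] at h1
    have h2 := aux_step n τ hτ u
    have h3 := aux_step n τ hτ ((disLap n).mulVec u)
    rw [← hM] at h2 h3
    have h4 := aux_nonneg ((disLap n).mulVec ((disLap n).mulVec u))
    refine le_trans ?_ h1
    have h5 : (disLap n).mulVec u ⬝ᵥ (disLap n).mulVec u ≤
        M.mulVec ((disLap n).mulVec u) ⬝ᵥ M.mulVec ((disLap n).mulVec u) := by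
      nlinarith [mul_nonneg hτ.le h4]
    have h6 : 0 ≤ 2 * τ * (k : ℝ) := by positivity
    have h7 := mul_le_mul_of_nonneg_left h5 h6
    push_cast
    linarith

lemma aux_inv (n : ℕ) (τ : ℝ) (hτ : 0 < τ) (k : ℕ) (a : Fin (n - 1) → ℝ) :
    (((1 : Matrix (Fin (n - 1)) (Fin (n - 1)) ℝ) + τ • (disLap n * disLap n)) ^ k).mulVec
     ((((1 : Matrix (Fin (n - 1)) (Fin (n - 1)) ℝ) + τ • (disLap n * disLap n)) ^ k)⁻¹.mulVec a)
      = a := by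
  set P := (((1 : Matrix (Fin (n - 1)) (Fin (n - 1)) ℝ) + τ • (disLap n * disLap n)) ^ k) with hP
  have hu : IsUnit P := by
    rw [← Matrix.mulVec_injective_iff_isUnit]
    intro x y hxy
    have h0 : P.mulVec (x - y) = 0 := by
      rw [Matrix.mulVec_sub]; exact sub_eq_zero.2 hxy
    have h1 := aux_pow n τ hτ k (x - y)
    rw [← hP, h0] at h1
    have h2 := aux_nonneg ((disLap n).mulVec (x - y))
    have h3 := aux_nonneg (x - y)
    have h6 : 0 ≤ 2 * τ * (k : ℝ) := by positivity
    have h4 : (x - y) ⬝ᵥ (x - y) = 0 := by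
      have := mul_nonneg h6 h2
      simp only [dotProduct_zero] at h1
      linarith
    exact sub_eq_zero.1 (dotProduct_self_eq_zero.1 h4)
  rw [Matrix.mulVec_mulVec, Matrix.mul_nonsing_inv _ ((Matrix.isUnit_iff_isUnit_det _).1 hu),
    Matrix.one_mulVec]

lemma aux_parts (U : ℕ → ℝ) (m : ℕ) :
    ∑ i ∈ range m, U (i + 1) * (U i - 2 * U (i + 1) + U (i + 2))
      + ∑ j ∈ range (m + 1), (U (j + 1) - U j) ^ 2
      = U (m + 1) * (U (m + 1) - U m) - U 0 * (U 1 - U 0) := by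
  induction m with
  | zero => simp; ring
  | succ m ih =>
    rw [Finset.sum_range_succ, Finset.sum_range_succ _ (m + 1)]
    linear_combination ih

lemma aux_agmon (U : ℕ → ℝ) (m : ℕ) (h0 : U 0 = 0) (hm : U (m + 1) = 0) (k : ℕ)
    (hk : k ≤ m + 1) :
    (U k) ^ 8 ≤ 16 * (∑ i ∈ range m, U (i + 1) ^ 2) ^ 3 *
      ∑ i ∈ range m, (U i - 2 * U (i + 1) + U (i + 2)) ^ 2 := by
  set S := ∑ i ∈ range m, U (i + 1) ^ 2 with hS
  set Q := ∑ i ∈ range m, (U i - 2 * U (i + 1) + U (i + 2)) ^ 2 with hQ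
  set E := ∑ j ∈ range (m + 1), (U (j + 1) - U j) ^ 2 with hE
  have hS0 : 0 ≤ S := Finset.sum_nonneg fun i _ => sq_nonneg _
  have hE0 : 0 ≤ E := Finset.sum_nonneg fun i _ => sq_nonneg _
  have hES : E ^ 2 ≤ S * Q := by
    have h1 := aux_parts U m
    rw [h0, hm, ← hE] at h1
    have h2 := Finset.sum_mul_sq_le_sq_mul_sq (range m) (fun i => U (i + 1))
      (fun i => U i - 2 * U (i + 1) + U (i + 2))
    have h3 : E = - ∑ i ∈ range m, U (i + 1) * (U i - 2 * U (i + 1) + U (i + 2)) := by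
      linarith
    rw [h3, neg_sq]
    exact h2
  have hF : ∑ j ∈ range (m + 1), (U (j + 1) + U j) ^ 2 ≤ 4 * S := by
    have e1 : ∑ j ∈ range (m + 1), U (j + 1) ^ 2 = S := by
      rw [Finset.sum_range_succ, hm]; simp [hS]
    have e2 : ∑ j ∈ range (m + 1), U j ^ 2 = S := by
      rw [Finset.sum_range_succ', h0]; simp [hS]
    calc _ ≤ ∑ j ∈ range (m + 1), (2 * U (j + 1) ^ 2 + 2 * U j ^ 2) :=
          Finset.sum_le_sum fun j _ => by nlinarith [sq_nonneg (U (j + 1) - U j)]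
      _ = 4 * S := by
          rw [Finset.sum_add_distrib, ← Finset.mul_sum, ← Finset.mul_sum, e1, e2]; ring
  have h4 : (U k) ^ 4 ≤ E * (4 * S) := by
    have t : U k ^ 2 = ∑ j ∈ range k, (U (j + 1) - U j) * (U (j + 1) + U j) := by
      have := Finset.sum_range_sub (fun j => U j ^ 2) k
      rw [h0] at this
      rw [← sub_zero (U k ^ 2), show (0 : ℝ) = 0 ^ 2 by norm_num, ← this]
      exact Finset.sum_congr rfl fun j _ => by ring
    have h2 := Finset.sum_mul_sq_le_sq_mul_sq (range k) (fun j => U (j + 1) - U j)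
      (fun j => U (j + 1) + U j)
    rw [← t] at h2
    have hsub : range k ⊆ range (m + 1) := Finset.range_subset_range.2 hk
    have a1 : ∑ j ∈ range k, (U (j + 1) - U j) ^ 2 ≤ E :=
      Finset.sum_le_sum_of_subset_of_nonneg hsub fun _ _ _ => sq_nonneg _
    have a2 : ∑ j ∈ range k, (U (j + 1) + U j) ^ 2 ≤ 4 * S :=
      le_trans (Finset.sum_le_sum_of_subset_of_nonneg hsub fun _ _ _ => sq_nonneg _) hF
    calc (U k) ^ 4 = (U k ^ 2) ^ 2 := by ring
      _ ≤ _ := h2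
      _ ≤ _ := mul_le_mul a1 a2 (Finset.sum_nonneg fun i _ => sq_nonneg _) hE0
  calc (U k) ^ 8 = (U k ^ 4) ^ 2 := by ring
    _ ≤ (E * (4 * S)) ^ 2 := by gcongr
    _ = 16 * S ^ 2 * E ^ 2 := by ring
    _ ≤ 16 * S ^ 2 * (S * Q) := by gcongr
    _ = _ := by ring

def auxExt (m : ℕ) (u : Fin m → ℝ) (k : ℕ) : ℝ :=
  if h : 1 ≤ k ∧ k - 1 < m then u ⟨k - 1, h.2⟩ else 0

lemma auxExt_succ (m : ℕ) (u : Fin m → ℝ) (i : Fin m) : auxExt m u (i + 1) = u i := by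
  simp [auxExt]

lemma aux_mulVec (m : ℕ) (u : Fin m → ℝ) (i : Fin m) :
    (disLap (m + 1)).mulVec u i = (((m + 1 : ℕ) : ℝ) ^ 2 / Real.pi ^ 2) *
      (auxExt m u i - 2 * auxExt m u (i + 1) + auxExt m u (i + 2)) := by
  have h1 : (disLap (m + 1)).mulVec u i = ∑ j : Fin m, (((m + 1 : ℕ) : ℝ) ^ 2 / Real.pi ^ 2) *
      (if (i : ℕ) = (j : ℕ) then -2
       else if (i : ℕ) + 1 = (j : ℕ) ∨ (j : ℕ) + 1 = (i : ℕ) then 1 else 0)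
      * auxExt m u (j + 1) := by
    simp only [auxExt_succ]
    rfl
  rw [h1, Fin.sum_univ_eq_sum_range (fun j => (((m + 1 : ℕ) : ℝ) ^ 2 / Real.pi ^ 2) *
      (if (i : ℕ) = j then -2
       else if (i : ℕ) + 1 = j ∨ j + 1 = (i : ℕ) then 1 else 0)
      * auxExt m u (j + 1)) m]
  simp only [mul_assoc]
  rw [← Finset.mul_sum]
  congr 1
  have h2 : ∀ j ∈ range m, (if (i : ℕ) = j then (-2 : ℝ)
       else if (i : ℕ) + 1 = j ∨ j + 1 = (i : ℕ) then 1 else 0) * auxExt m u (j + 1)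
      = (if (i : ℕ) = j then -2 * auxExt m u (j + 1) else 0)
        + (if (i : ℕ) + 1 = j then auxExt m u (j + 1) else 0)
        + (if (i : ℕ) = j + 1 then auxExt m u (j + 1) else 0) := by
    intro j _
    split_ifs <;> first | omega | simp
  rw [Finset.sum_congr rfl h2, Finset.sum_add_distrib, Finset.sum_add_distrib,
    Finset.sum_ite_eq, Finset.sum_ite_eq]
  have hi := i.2
  have h3 : ∑ j ∈ range m, (if (i : ℕ) = j + 1 then auxExt m u (j + 1) else 0)
      = auxExt m u i := by
    rcases Nat.eq_zero_or_pos (i : ℕ) with h | h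
    · rw [h]
      simp [auxExt]
    · obtain ⟨q, hq⟩ : ∃ q, (i : ℕ) = q + 1 := ⟨i - 1, by omega⟩
      rw [hq]
      simp only [add_left_inj]
      rw [Finset.sum_ite_eq, if_pos (by simp; omega)]
  have h4 : (if (i : ℕ) + 1 ∈ range m then auxExt m u (i + 1 + 1) else 0)
      = auxExt m u (i + 2) := by
    split_ifs with h
    · rfl
    · have : ¬ ((i : ℕ) + 1 < m) := by simpa using h
      simp [auxExt, this]
  rw [h3, h4, if_pos (by simp)]
  ring

lemma aux_sup (n : ℕ) (hn : 2 ≤ n) (u : Fin (n - 1) → ℝ) (i : Fin (n - 1)) :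
    (u i) ^ 8 ≤ 16 * (u ⬝ᵥ u) ^ 3 *
      ((Real.pi / n) ^ 4 * ((disLap n).mulVec u ⬝ᵥ (disLap n).mulVec u)) := by
  obtain ⟨m, rfl⟩ : ∃ m, n = m + 1 := ⟨n - 1, by omega⟩
  change Fin m → ℝ at u
  change Fin m at i
  have h := aux_agmon (auxExt m u) m (by simp [auxExt]) (by simp [auxExt]) (i + 1)
    (by have := i.2; omega)
  rw [auxExt_succ] at h
  refine h.trans (le_of_eq ?_)
  have e1 : ∑ j ∈ range m, auxExt m u (j + 1) ^ 2 = u ⬝ᵥ u := by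
    rw [← Fin.sum_univ_eq_sum_range (fun j => auxExt m u (j + 1) ^ 2) m]
    simp only [auxExt_succ, dotProduct, sq]
  have e2 : (Real.pi / ((m + 1 : ℕ) : ℝ)) ^ 4 *
      ((disLap (m + 1)).mulVec u ⬝ᵥ (disLap (m + 1)).mulVec u) =
      ∑ j ∈ range m, (auxExt m u j - 2 * auxExt m u (j + 1) + auxExt m u (j + 2)) ^ 2 := by
    rw [← Fin.sum_univ_eq_sum_range (fun j =>
      (auxExt m u j - 2 * auxExt m u (j + 1) + auxExt m u (j + 2)) ^ 2) m]
    rw [dotProduct, Finset.mul_sum]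
    refine Finset.sum_congr rfl fun j _ => ?_
    rw [aux_mulVec]
    have hpi := Real.pi_ne_zero
    have hm : ((m + 1 : ℕ) : ℝ) ≠ 0 := by positivity
    field_simp
  rw [e1]
  congr 1
  exact e2.symm

lemma l2n_sq (n : ℕ) (a : Fin (n - 1) → ℝ) : l2n n a ^ 2 = (Real.pi / n) * (a ⬝ᵥ a) := by
  rw [l2n, Real.sq_sqrt]
  · simp only [dotProduct, sq]
  · have := Real.pi_pos
    exact mul_nonneg (by positivity) (Finset.sum_nonneg fun i _ => sq_nonneg _)

lemma l2n_nonneg (n : ℕ) (a : Fin (n - 1) → ℝ) : 0 ≤ l2n n a := Real.sqrt_nonneg _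

/-- `l^2` contraction and `l^2`-`l^∞` smoothing. -/
lemma aux_main (n : ℕ) (hn : 2 ≤ n) (τ : ℝ) (hτ : 0 < τ) (k : ℕ) (hk : 1 ≤ k)
    (a u : Fin (n - 1) → ℝ)
    (hu : (((1 : Matrix (Fin (n - 1)) (Fin (n - 1)) ℝ)
      + τ • (disLap n * disLap n)) ^ k).mulVec u = a) :
    l2n n u ≤ l2n n a ∧ ∀ i, |u i| ≤ 2 * (τ * k) ^ (-(1 / 8 : ℝ)) * l2n n a := by
  have h1 := aux_pow n τ hτ k u
  rw [hu] at h1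
  have hk' : (0 : ℝ) < k := by exact_mod_cast hk
  have hT : 0 < τ * k := by positivity
  have hpn : 0 < Real.pi / n := by
    have := Real.pi_pos
    have : (0 : ℝ) < n := by exact_mod_cast (by omega : 0 < n)
    positivity
  set Q := (disLap n).mulVec u ⬝ᵥ (disLap n).mulVec u with hQ
  have hQ0 : 0 ≤ Q := aux_nonneg _
  have hS0 := aux_nonneg u
  have hN0 := aux_nonneg a
  have hTQ : 0 ≤ (τ * k) * Q := mul_nonneg hT.le hQ0
  have hS : u ⬝ᵥ u ≤ a ⬝ᵥ a := by nlinarith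
  have hQN : Q ≤ (τ * k)⁻¹ * (a ⬝ᵥ a) := by
    rw [← div_eq_inv_mul, le_div_iff₀ hT]; nlinarith
  refine ⟨?_, fun i => ?_⟩
  · refine le_of_sq_le_sq ?_ (l2n_nonneg n a)
    rw [l2n_sq, l2n_sq]
    exact mul_le_mul_of_nonneg_left hS hpn.le
  · have hR : 0 ≤ 2 * (τ * k) ^ (-(1 / 8 : ℝ)) * l2n n a := by
      have := l2n_nonneg n a
      positivity
    refine le_of_pow_le_pow_left₀ (n := 8) (by norm_num) hR ?_
    have e1 : ((τ * k) ^ (-(1 / 8 : ℝ))) ^ 8 = (τ * k)⁻¹ := by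
      rw [← Real.rpow_natCast, ← Real.rpow_mul hT.le, ← Real.rpow_neg_one]
      norm_num
    have e2 : l2n n a ^ 8 = ((Real.pi / n) * (a ⬝ᵥ a)) ^ 4 := by
      rw [← l2n_sq]; ring
    rw [mul_pow, mul_pow, e1, e2]
    have e3 : |u i| ^ 8 = (u i) ^ 8 := by
      rw [← abs_pow]; exact abs_of_nonneg (by positivity)
    rw [e3]
    calc (u i) ^ 8 ≤ 16 * (u ⬝ᵥ u) ^ 3 * ((Real.pi / n) ^ 4 * Q) := aux_sup n hn u i
      _ ≤ 16 * (a ⬝ᵥ a) ^ 3 * ((Real.pi / n) ^ 4 * ((τ * k)⁻¹ * (a ⬝ᵥ a))) := by gcongr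
      _ = 16 * ((τ * k)⁻¹ * ((Real.pi / n) * (a ⬝ᵥ a)) ^ 4) := by ring
      _ ≤ 2 ^ 8 * ((τ * k)⁻¹ * ((Real.pi / n) * (a ⬝ᵥ a)) ^ 4) := by
          gcongr; norm_num
      _ = _ := by ring

lemma aux_interp (n : ℕ) (p : ℝ) (hp : 2 ≤ p) (u : Fin (n - 1) → ℝ)
    (M L : ℝ) (hM0 : 0 ≤ M) (hL : l2n n u ≤ L) (hM : ∀ i, |u i| ≤ M) :
    lpn n p u ≤ M ^ (1 - 2 / p) * L ^ (2 / p) := by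
  have hp0 : 0 < p := by linarith
  have hL0 : 0 ≤ L := (l2n_nonneg n u).trans hL
  have hpn : 0 ≤ Real.pi / n := by have := Real.pi_pos; positivity
  have h1 : ∑ i, |u i| ^ p ≤ M ^ (p - 2) * (u ⬝ᵥ u) := by
    rw [dotProduct, Finset.mul_sum]
    refine Finset.sum_le_sum fun i _ => ?_
    have e : |u i| ^ p = |u i| ^ (p - 2) * (u i * u i) := by
      rcases eq_or_ne (u i) 0 with h | h
      · simp [h, Real.zero_rpow hp0.ne']
      · have h' : 0 < |u i| := abs_pos.2 h
        rw [← abs_mul_abs_self (u i), ← sq, ← Real.rpow_natCast, ← Real.rpow_add h']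
        norm_num
    rw [e]
    exact mul_le_mul_of_nonneg_right
      (Real.rpow_le_rpow (abs_nonneg _) (hM i) (by linarith)) (mul_self_nonneg _)
  have h2 : (Real.pi / n) * ∑ i, |u i| ^ p ≤ M ^ (p - 2) * L ^ 2 := by
    calc _ ≤ (Real.pi / n) * (M ^ (p - 2) * (u ⬝ᵥ u)) := mul_le_mul_of_nonneg_left h1 hpn
      _ = M ^ (p - 2) * l2n n u ^ 2 := by rw [l2n_sq]; ring
      _ ≤ _ := mul_le_mul_of_nonneg_left (pow_le_pow_left₀ (l2n_nonneg n u) hL 2)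
          (Real.rpow_nonneg hM0 _)
  rw [lpn]
  refine (Real.rpow_le_rpow (mul_nonneg hpn (Finset.sum_nonneg fun i _ =>
    Real.rpow_nonneg (abs_nonneg _) _)) h2 (by positivity)).trans (le_of_eq ?_)
  rw [Real.mul_rpow (Real.rpow_nonneg hM0 _) (by positivity), ← Real.rpow_mul hM0,
    ← Real.rpow_natCast L, ← Real.rpow_mul hL0]
  congr 2
  · field_simp
  · push_cast; ring

/-- For every `p ∈ [2,∞]` there is `C = C(p) > 0`, independent of `n`, `τ`, `ι`, `a`, such
that for all `n ≥ 2`, `τ > 0`, integers `ι ≥ 1`, and `a ∈ ℝ^{n-1}`: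
`‖(I + τA_n²)^{-ι} a‖_{l^p_n} ≤ C (τι)^{-(1/4)(1/2 - 1/p)} ‖a‖_{l²_n}` (with `1/∞ := 0`),
where `(I + τA_n²)^{-ι}` is the `ι`-th power of the inverse of `I + τA_n²`. -/
theorem stmt11 (p : ℝ≥0∞) (hp : 2 ≤ p) :
    ∃ C : ℝ, 0 < C ∧ ∀ n : ℕ, 2 ≤ n → ∀ τ : ℝ, 0 < τ → ∀ ι : ℕ, 1 ≤ ι →
      ∀ a : Fin (n - 1) → ℝ,
        lpEn n p ((((1 : Matrix (Fin (n - 1)) (Fin (n - 1)) ℝ)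
              + τ • (disLap n * disLap n)) ^ ι)⁻¹.mulVec a)
          ≤ C * (τ * (ι : ℝ)) ^ (-(1 / 4 : ℝ) * (1 / 2 - (p⁻¹).toReal)) * l2n n a := by
  refine ⟨2, by norm_num, fun n hn τ hτ k hk a => ?_⟩
  have hu := aux_inv n τ hτ k a
  set u := (((1 : Matrix (Fin (n - 1)) (Fin (n - 1)) ℝ)
              + τ • (disLap n * disLap n)) ^ k)⁻¹.mulVec a
  obtain ⟨h1, h2⟩ := aux_main n hn τ hτ k hk a u hu
  have hk' : (0 : ℝ) < k := by exact_mod_cast hk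
  have hT : 0 < τ * k := by positivity
  have hL0 := l2n_nonneg n a
  rw [lpEn]
  split_ifs with hpt
  · subst hpt
    have e : (-(1 / 4 : ℝ) * (1 / 2 - ((⊤ : ℝ≥0∞)⁻¹).toReal)) = -(1 / 8 : ℝ) := by
      simp; norm_num
    rw [e]
    exact Real.iSup_le h2 (by positivity)
  · have hp2 : 2 ≤ p.toReal := by
      have := ENNReal.toReal_mono hpt hp
      simpa using this
    rw [ENNReal.toReal_inv]
    set q := p.toReal
    have hq0 : 0 < q := by linarith
    have hθ : 0 ≤ 1 - 2 / q := by
      rw [sub_nonneg, div_le_one hq0]; exact hp2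
    have hθ1 : 1 - 2 / q ≤ 1 := by
      have : 0 ≤ 2 / q := by positivity
      linarith
    refine (aux_interp n q hp2 u _ _ (by positivity) h1 h2).trans ?_
    rw [Real.mul_rpow (by positivity) hL0, Real.mul_rpow (by positivity) (by positivity),
      ← Real.rpow_mul hT.le, mul_assoc, ← Real.rpow_add_of_nonneg hL0 hθ (by positivity)]
    have e1 : 1 - 2 / q + 2 / q = 1 := by ring
    have e2 : -(1 / 8 : ℝ) * (1 - 2 / q) = -(1 / 4 : ℝ) * (1 / 2 - q⁻¹) := by
      rw [div_eq_mul_inv]; ring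
    rw [e1, e2, Real.rpow_one]
    have e3 : (2 : ℝ) ^ (1 - 2 / q) ≤ 2 := by
      simpa using Real.rpow_le_rpow_of_exponent_le (by norm_num : (1 : ℝ) ≤ 2) hθ1
    gcongr
end
end

section
/- For every α ∈ (0,1) and every T > 0 there exists a constant C = C(α,T) > 0, independent of n, such that for all integers n ≥ 2, all x, y ∈ (0,π), and all 0 ≤ s < t ≤ T: ∫₀ˢ ∫₀^π |Δ_nG^n_{t-r}(x,z) - Δ_nG^n_{s-r}(y,z)| dz dr ≤ C (|x-y| + (t-s)^{3α/8}), and ∫ₛᵗ ∫₀^π |Δ_nG^n_{t-r}(x,z)| dz dr ≤ C (t-s)^{3α/8}. -/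
noncomputable section

open Real intervalIntegral

/-- The Dirichlet eigenfunctions `φ_j(x) = √(2/π) sin(jx)` on `(0,π)`. -/
def phiF (j : ℕ) (x : ℝ) : ℝ := Real.sqrt (2 / Real.pi) * Real.sin (j * x)

/-- The Green function of `∂_t + Δ²` with Dirichlet boundary conditions on `(0,π)`:
`G_t(x,y) = Σ_{j≥1} e^{-j⁴ t} φ_j(x) φ_j(y)`. -/
def GF (t x y : ℝ) : ℝ :=
  ∑' j : ℕ, Real.exp (-((j : ℝ) + 1) ^ 4 * t) * phiF (j + 1) x * phiF (j + 1) y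

/-- `ΔG_t(x,y) = -Σ_{j≥1} j² e^{-j⁴ t} φ_j(x) φ_j(y)`. -/
def DGF (t x y : ℝ) : ℝ :=
  -∑' j : ℕ, ((j : ℝ) + 1) ^ 2 * Real.exp (-((j : ℝ) + 1) ^ 4 * t) * phiF (j + 1) x * phiF (j + 1) y

/-- The grid projection `κ_n(y) = h⌊y/h⌋` with `h = π/n`. -/
def kap (n : ℕ) (y : ℝ) : ℝ := (Real.pi / n) * ⌊y / (Real.pi / n)⌋

/-- The eigenvalue `λ_{j,n} = -(4n²/π²) sin²(jπ/(2n))` of the discrete Dirichlet Laplacian. -/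
def lamEig (j n : ℕ) : ℝ :=
  -(4 * (n : ℝ) ^ 2 / Real.pi ^ 2) * Real.sin ((j : ℝ) * Real.pi / (2 * n)) ^ 2

/-- The piecewise-linear interpolant `φ_{j,n}` of `φ_j` on the grid `{0, h, …, π}`. -/
def phiIn (n j : ℕ) (x : ℝ) : ℝ :=
  phiF j (kap n x)
    + ((n : ℝ) / Real.pi) * (x - kap n x) * (phiF j (kap n x + Real.pi / n) - phiF j (kap n x))

/-- The spatially discrete Green function
`G^n_t(x,y) = Σ_{j=1}^{n-1} e^{-λ_{j,n}² t} φ_{j,n}(x) φ_j(κ_n(y))`. -/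
def Gn (n : ℕ) (t x y : ℝ) : ℝ :=
  ∑ j ∈ Finset.range (n - 1),
    Real.exp (-(lamEig (j + 1) n) ^ 2 * t) * phiIn n (j + 1) x * phiF (j + 1) (kap n y)

/-- `Δ_nG^n_t(x,y) = Σ_{j=1}^{n-1} λ_{j,n} e^{-λ_{j,n}² t} φ_{j,n}(x) φ_j(κ_n(y))`. -/
def DGn (n : ℕ) (t x y : ℝ) : ℝ :=
  ∑ j ∈ Finset.range (n - 1),
    lamEig (j + 1) n * Real.exp (-(lamEig (j + 1) n) ^ 2 * t)
      * phiIn n (j + 1) x * phiF (j + 1) (kap n y)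

/-- The fully discrete Green function
`G^{n,τ}_t(x,y) = Σ_{j=1}^{n-1} (1 + τλ_{j,n}²)^{-⌊t/τ⌋} φ_{j,n}(x) φ_j(κ_n(y))`. -/
def Gnt (n : ℕ) (τ t x y : ℝ) : ℝ :=
  ∑ j ∈ Finset.range (n - 1),
    ((1 + τ * (lamEig (j + 1) n) ^ 2) ^ (⌊t / τ⌋₊))⁻¹ * phiIn n (j + 1) x * phiF (j + 1) (kap n y)

/-- `Δ_nG^{n,τ}_t(x,y) = Σ_{j=1}^{n-1} λ_{j,n} (1 + τλ_{j,n}²)^{-⌊t/τ⌋} φ_{j,n}(x) φ_j(κ_n(y))`. -/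
def DGnt (n : ℕ) (τ t x y : ℝ) : ℝ :=
  ∑ j ∈ Finset.range (n - 1),
    lamEig (j + 1) n * ((1 + τ * (lamEig (j + 1) n) ^ 2) ^ (⌊t / τ⌋₊))⁻¹
      * phiIn n (j + 1) x * phiF (j + 1) (kap n y)

lemma aux_sum_cos (u : ℝ) (n : ℕ) :
    2 * Real.sin (u / 2) * ∑ l ∈ Finset.range n, Real.cos (l * u)
      = Real.sin (n * u - u / 2) + Real.sin (u / 2) := by
  induction n with
  | zero => simp [Real.sin_neg]
  | succ k ih =>
    rw [Finset.sum_range_succ, mul_add, ih]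
    have h : (((k + 1 : ℕ) : ℝ) * u - u / 2) = k * u + u / 2 := by push_cast; ring
    rw [h, Real.sin_add, Real.sin_sub]
    ring

lemma aux_sum_cos_nat (n m : ℕ) (hm : 0 < m) (hmn : m < 2 * n) :
    ∑ l ∈ Finset.range n, Real.cos (l * (m * Real.pi / n)) = (1 - (-1) ^ m) / 2 := by
  have hn : (0 : ℝ) < n := by
    have : 0 < n := by omega
    exact_mod_cast this
  have h := aux_sum_cos (m * Real.pi / n) n
  have e1 : (n : ℝ) * (m * Real.pi / n) - (m * Real.pi / n) / 2
      = m * Real.pi - (m * Real.pi / n) / 2 := by field_simp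
  rw [e1, Real.sin_sub, Real.sin_nat_mul_pi, Real.cos_nat_mul_pi] at h
  have hpos : 0 < Real.sin ((m * Real.pi / n) / 2) := by
    apply Real.sin_pos_of_pos_of_lt_pi
    · have : (0 : ℝ) < m := by exact_mod_cast hm
      positivity
    · have : (m : ℝ) < 2 * n := by exact_mod_cast hmn
      rw [div_div, div_lt_iff₀ (by positivity)]
      nlinarith [Real.pi_pos]
  have h2 : Real.sin ((m * Real.pi / n) / 2) *
      (2 * ∑ l ∈ Finset.range n, Real.cos (l * (m * Real.pi / n)) - (1 - (-1) ^ m)) = 0 := by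
    linear_combination h
  rcases mul_eq_zero.mp h2 with h3 | h3
  · exact absurd h3 hpos.ne'
  · linarith

lemma aux_orth_lt (n j k : ℕ) (hk : 0 < k) (hkj : k < j) (hj : j < n) :
    ∑ l ∈ Finset.range n, Real.sin (j * (l * (Real.pi / n))) * Real.sin (k * (l * (Real.pi / n)))
      = 0 := by
  obtain ⟨d, rfl⟩ := Nat.exists_eq_add_of_lt hkj
  have h1 := aux_sum_cos_nat n (d + 1) (by omega) (by omega)
  have h2 := aux_sum_cos_nat n (d + 1 + 2 * k) (by omega) (by omega)
  rw [pow_add, pow_mul] at h2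
  norm_num at h2
  have h3 : ∑ l ∈ Finset.range n, Real.sin (((k + d + 1 : ℕ) : ℝ) * (l * (Real.pi / n)))
        * Real.sin (k * (l * (Real.pi / n)))
      = ∑ l ∈ Finset.range n, (Real.cos (l * ((d + 1 : ℕ) * Real.pi / n))
        - Real.cos (l * ((d + 1 + 2 * k : ℕ) * Real.pi / n))) / 2 := by
    apply Finset.sum_congr rfl
    intro l _
    have e1 : (l : ℝ) * ((d + 1 : ℕ) * Real.pi / n)
      = ((k + d + 1 : ℕ) : ℝ) * (l * (Real.pi / n)) - k * (l * (Real.pi / n)) := by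
      push_cast; ring
    have e2 : (l : ℝ) * ((d + 1 + 2 * k : ℕ) * Real.pi / n)
      = ((k + d + 1 : ℕ) : ℝ) * (l * (Real.pi / n)) + k * (l * (Real.pi / n)) := by
      push_cast; ring
    rw [e1, e2, Real.cos_sub, Real.cos_add]
    ring
  rw [h3, ← Finset.sum_div, Finset.sum_sub_distrib, h1]
  push_cast at h2 ⊢
  rw [h2]
  ring

lemma aux_orth_self (n j : ℕ) (hj : 0 < j) (hjn : j < n) :
    ∑ l ∈ Finset.range n, Real.sin (j * (l * (Real.pi / n))) * Real.sin (j * (l * (Real.pi / n)))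
      = n / 2 := by
  have h2 := aux_sum_cos_nat n (2 * j) (by omega) (by omega)
  rw [pow_mul] at h2
  norm_num at h2
  have h3 : ∑ l ∈ Finset.range n, Real.sin (j * (l * (Real.pi / n)))
        * Real.sin (j * (l * (Real.pi / n)))
      = ∑ l ∈ Finset.range n, (1 - Real.cos (l * (2 * j * Real.pi / n))) / 2 := by
    apply Finset.sum_congr rfl
    intro l _
    have e1 : (l : ℝ) * (2 * j * Real.pi / n) = 2 * (j * (l * (Real.pi / n))) := by ring
    rw [e1, Real.cos_two_mul]
    nlinarith [Real.sin_sq_add_cos_sq (j * (l * (Real.pi / n)))]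
  rw [h3, ← Finset.sum_div, Finset.sum_sub_distrib, h2]
  simp

lemma aux_orth (n j k : ℕ) (hj : 0 < j) (hk : 0 < k) (hjn : j < n) (hkn : k < n) :
    ∑ l ∈ Finset.range n, phiF j (l * (Real.pi / n)) * phiF k (l * (Real.pi / n))
      = if j = k then n / Real.pi else 0 := by
  have e : ∑ l ∈ Finset.range n, phiF j (l * (Real.pi / n)) * phiF k (l * (Real.pi / n))
      = (2 / Real.pi) * ∑ l ∈ Finset.range n,
        Real.sin (j * (l * (Real.pi / n))) * Real.sin (k * (l * (Real.pi / n))) := by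
    rw [Finset.mul_sum]
    apply Finset.sum_congr rfl
    intro l _
    have := Real.mul_self_sqrt (show (0 : ℝ) ≤ 2 / Real.pi by positivity)
    unfold phiF
    linear_combination (Real.sin (j * (l * (Real.pi / n))) * Real.sin (k * (l * (Real.pi / n)))) * this
  rw [e]
  rcases lt_trichotomy j k with h | h | h
  · rw [if_neg h.ne]
    have := aux_orth_lt n k j hj h hkn
    simp_rw [mul_comm (Real.sin ((j : ℝ) * _))]
    rw [this, mul_zero]
  · subst h
    rw [if_pos rfl, aux_orth_self n j hj hjn]
    field_simp
  · rw [if_neg h.ne', aux_orth_lt n j k hk h hjn, mul_zero]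

lemma aux_parseval (n : ℕ) (hn : 2 ≤ n) (a : ℕ → ℝ) :
    ∑ l ∈ Finset.range n, (∑ j ∈ Finset.range (n - 1), a j * phiF (j + 1) (l * (Real.pi / n))) ^ 2
      = n / Real.pi * ∑ j ∈ Finset.range (n - 1), a j ^ 2 := by
  simp_rw [sq, Finset.sum_mul_sum]
  rw [Finset.sum_comm, Finset.mul_sum]
  apply Finset.sum_congr rfl
  intro j hj
  rw [Finset.mem_range] at hj
  rw [Finset.sum_comm]
  have : ∀ k ∈ Finset.range (n - 1),
      ∑ l ∈ Finset.range n, a j * phiF (j + 1) (l * (Real.pi / n))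
        * (a k * phiF (k + 1) (l * (Real.pi / n)))
      = if k = j then a j * a j * (n / Real.pi) else 0 := by
    intro k hk
    rw [Finset.mem_range] at hk
    have h := aux_orth n (j + 1) (k + 1) (by omega) (by omega) (by omega) (by omega)
    have e : ∑ l ∈ Finset.range n, a j * phiF (j + 1) (l * (Real.pi / n))
        * (a k * phiF (k + 1) (l * (Real.pi / n)))
      = (a j * a k) * ∑ l ∈ Finset.range n,
        phiF (j + 1) (l * (Real.pi / n)) * phiF (k + 1) (l * (Real.pi / n)) := by
      rw [Finset.mul_sum]
      exact Finset.sum_congr rfl (fun l _ => by ring)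
    rw [e, h]
    by_cases hjk : k = j
    · subst hjk; simp
    · rw [if_neg (by omega), if_neg hjk, mul_zero]
  rw [Finset.sum_congr rfl this, Finset.sum_ite_eq']
  rw [if_pos (by simpa using hj)]
  ring

lemma aux_kap (n : ℕ) (hn : 0 < n) (l : ℕ) (z : ℝ) (h1 : l * (Real.pi / n) ≤ z)
    (h2 : z < (l + 1) * (Real.pi / n)) : kap n z = l * (Real.pi / n) := by
  have hn' : (0 : ℝ) < n := by exact_mod_cast hn
  have hh : 0 < Real.pi / n := by positivity
  have : ⌊z / (Real.pi / n)⌋ = (l : ℤ) := by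
    rw [Int.floor_eq_iff]
    constructor
    · rw [le_div_iff₀ hh]; exact_mod_cast h1
    · rw [div_lt_iff₀ hh]; exact_mod_cast h2
  unfold kap
  rw [this]
  push_cast
  ring

lemma aux_integral (n : ℕ) (hn : 0 < n) (g : ℝ → ℝ) :
    ∫ z in (0 : ℝ)..Real.pi, g (kap n z)
      = Real.pi / n * ∑ l ∈ Finset.range n, g (l * (Real.pi / n)) := by
  have hn' : (0 : ℝ) < n := by exact_mod_cast hn
  have hh : 0 < Real.pi / n := by positivity
  have key : ∀ l : ℕ, ∀ z ∈ Set.Ioo ((l : ℝ) * (Real.pi / n)) (((l + 1 : ℕ) : ℝ) * (Real.pi / n)),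
      g (kap n z) = g (l * (Real.pi / n)) := by
    intro l z hz
    rw [aux_kap n hn l z hz.1.le (by have := hz.2; push_cast at this; exact this)]
  have hle : ∀ l : ℕ, (l : ℝ) * (Real.pi / n) ≤ ((l + 1 : ℕ) : ℝ) * (Real.pi / n) := by
    intro l; push_cast; nlinarith
  have hae : ∀ l : ℕ, ∀ᵐ z, z ∈ Set.uIoc ((l : ℝ) * (Real.pi / n)) (((l + 1 : ℕ) : ℝ) * (Real.pi / n)) →
      g (kap n z) = g (l * (Real.pi / n)) := by
    intro l
    have hne : ∀ᵐ z : ℝ, z ≠ ((l + 1 : ℕ) : ℝ) * (Real.pi / n) := by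
      simp [MeasureTheory.ae_iff]
    filter_upwards [hne] with z hz hz2
    rw [Set.uIoc_of_le (hle l)] at hz2
    exact key l z ⟨hz2.1, lt_of_le_of_ne hz2.2 hz⟩
  have hsum := intervalIntegral.sum_integral_adjacent_intervals (f := fun z => g (kap n z))
    (μ := MeasureTheory.volume) (a := fun l : ℕ => (l : ℝ) * (Real.pi / n)) (n := n) (by
      intro l _
      have : IntervalIntegrable (fun _ : ℝ => g (l * (Real.pi / n))) MeasureTheory.volume
        ((l : ℝ) * (Real.pi / n)) (((l + 1 : ℕ) : ℝ) * (Real.pi / n)) := by simp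
      refine this.congr_ae ?_
      rw [Filter.EventuallyEq, MeasureTheory.ae_restrict_iff' measurableSet_uIoc]
      filter_upwards [hae l] with z hz hz2
      exact (hz hz2).symm)
  have e0 : ((0 : ℕ) : ℝ) * (Real.pi / n) = 0 := by simp
  have e1 : (n : ℝ) * (Real.pi / n) = Real.pi := by field_simp
  simp only [e0, e1] at hsum
  rw [← hsum, Finset.mul_sum]
  apply Finset.sum_congr rfl
  intro l _
  rw [intervalIntegral.integral_congr_ae (hae l), intervalIntegral.integral_const, smul_eq_mul]
  push_cast
  ring

lemma aux_L1 (n : ℕ) (hn : 2 ≤ n) (a : ℕ → ℝ) (S : ℝ) (hS : 0 ≤ S)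
    (ha : ∑ j ∈ Finset.range (n - 1), a j ^ 2 ≤ S ^ 2) :
    ∫ z in (0 : ℝ)..Real.pi, |∑ j ∈ Finset.range (n - 1), a j * phiF (j + 1) (kap n z)|
      ≤ 4 * S := by
  have hn' : (0 : ℝ) < n := by
    have : 0 < n := by omega
    exact_mod_cast this
  rw [aux_integral n (by omega) (fun w => |∑ j ∈ Finset.range (n - 1), a j * phiF (j + 1) w|)]
  set F : ℕ → ℝ := fun l => ∑ j ∈ Finset.range (n - 1), a j * phiF (j + 1) (l * (Real.pi / n)) with hF
  have hp : ∑ l ∈ Finset.range n, F l ^ 2 = n / Real.pi * ∑ j ∈ Finset.range (n - 1), a j ^ 2 :=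
    aux_parseval n hn a
  have hcs : (∑ l ∈ Finset.range n, |F l|) ^ 2 ≤ n * ∑ l ∈ Finset.range n, F l ^ 2 := by
    have := sq_sum_le_card_mul_sum_sq (s := Finset.range n) (f := fun l => |F l|)
    simpa using this
  have hpi4 := Real.pi_le_four
  have hpi := Real.pi_pos
  have h0 : 0 ≤ Real.pi / n * ∑ l ∈ Finset.range n, |F l| :=
    mul_nonneg (by positivity) (Finset.sum_nonneg (fun _ _ => abs_nonneg _))
  refine (pow_le_pow_iff_left₀ h0 (by positivity) two_ne_zero).mp ?_
  rw [mul_pow]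
  calc (Real.pi / n) ^ 2 * (∑ l ∈ Finset.range n, |F l|) ^ 2
      ≤ (Real.pi / n) ^ 2 * (n * (n / Real.pi * ∑ j ∈ Finset.range (n - 1), a j ^ 2)) := by
        rw [← hp]; gcongr
    _ = Real.pi * ∑ j ∈ Finset.range (n - 1), a j ^ 2 := by field_simp
    _ ≤ 4 * S ^ 2 := by gcongr
    _ ≤ (4 * S) ^ 2 := by nlinarith [sq_nonneg S]

lemma aux_lam_lower (n j : ℕ) (hj : j < n - 1) :
    ((j : ℝ) + 1) ^ 2 / 4 ≤ |lamEig (j + 1) n| := by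
  have hn0 : 0 < n := by omega
  have hn' : (0 : ℝ) < n := by exact_mod_cast hn0
  have hpi := Real.pi_pos
  have hjn : (j : ℝ) + 1 ≤ n := by
    have : j + 1 ≤ n := by omega
    exact_mod_cast this
  set u : ℝ := ((j + 1 : ℕ) : ℝ) * Real.pi / (2 * n) with hu
  have hu0 : 0 ≤ u := by positivity
  have hu1 : u ≤ Real.pi / 2 := by
    rw [hu, div_le_div_iff₀ (by positivity) (by positivity)]
    push_cast
    nlinarith
  have hsin : 2 / Real.pi * u ≤ Real.sin u := Real.mul_le_sin hu0 hu1
  have e : 2 / Real.pi * u = ((j : ℝ) + 1) / n := by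
    rw [hu]; push_cast; field_simp
  rw [e] at hsin
  have hs2 : (((j : ℝ) + 1) / n) ^ 2 ≤ Real.sin u ^ 2 := by gcongr
  have habs : |lamEig (j + 1) n| = 4 * (n : ℝ) ^ 2 / Real.pi ^ 2 * Real.sin u ^ 2 := by
    unfold lamEig
    rw [neg_mul, abs_neg, abs_of_nonneg (by positivity)]
  rw [habs]
  have h1 : 4 * (n : ℝ) ^ 2 / Real.pi ^ 2 * (((j : ℝ) + 1) / n) ^ 2
      = 4 * ((j : ℝ) + 1) ^ 2 / Real.pi ^ 2 := by field_simp
  calc ((j : ℝ) + 1) ^ 2 / 4 ≤ 4 * ((j : ℝ) + 1) ^ 2 / Real.pi ^ 2 := by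
        rw [div_le_div_iff₀ (by positivity) (by positivity)]
        have : Real.pi ^ 2 ≤ 16 := by nlinarith [Real.pi_le_four]
        nlinarith [sq_nonneg ((j : ℝ) + 1)]
    _ ≤ _ := by rw [← h1]; gcongr

lemma aux_core (e : ℝ) (he : 1 / 4 < e) : ∃ K : ℝ, 0 < K ∧ ∀ n : ℕ, 2 ≤ n → ∀ a : ℕ → ℝ,
    ∀ M : ℝ, 0 ≤ M → (∀ j < n - 1, |a j| ≤ M * |lamEig (j + 1) n| ^ (-e)) →
    ∫ z in (0 : ℝ)..Real.pi, |∑ j ∈ Finset.range (n - 1), a j * phiF (j + 1) (kap n z)|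
      ≤ K * M := by
  have hsum : Summable (fun j : ℕ => 4 ^ (2 * e) * (((j : ℝ) + 1) ^ (-(4 * e)))) := by
    apply Summable.mul_left
    have h := (summable_nat_add_iff 1).mpr
      (Real.summable_nat_rpow (p := -(4 * e)).mpr (by linarith))
    simpa using h
  set B : ℝ := ∑' j : ℕ, (4 : ℝ) ^ (2 * e) * (((j : ℝ) + 1) ^ (-(4 * e))) with hB
  have hB0 : 0 ≤ B := tsum_nonneg (fun j => by positivity)
  refine ⟨4 * (B + 1), by positivity, ?_⟩
  intro n hn a M hM ha
  rw [mul_assoc]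
  apply aux_L1 n hn a _ (by positivity)
  have h1 : ∀ j ∈ Finset.range (n - 1),
      a j ^ 2 ≤ M ^ 2 * (4 ^ (2 * e) * (((j : ℝ) + 1) ^ (-(4 * e)))) := by
    intro j hj
    rw [Finset.mem_range] at hj
    have hl := aux_lam_lower n j hj
    have hpos : (0 : ℝ) < ((j : ℝ) + 1) ^ 2 / 4 := by positivity
    have h2 : |lamEig (j + 1) n| ^ (-e) ≤ (((j : ℝ) + 1) ^ 2 / 4) ^ (-e) :=
      Real.rpow_le_rpow_of_nonpos hpos hl (by linarith)
    have h3 : |a j| ≤ M * (((j : ℝ) + 1) ^ 2 / 4) ^ (-e) :=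
      (ha j hj).trans (by gcongr)
    have h4 : ((((j : ℝ) + 1) ^ 2 / 4) ^ (-e)) ^ 2
        = 4 ^ (2 * e) * (((j : ℝ) + 1) ^ (-(4 * e))) := by
      rw [Real.div_rpow (by positivity) (by norm_num), div_pow, ← Real.rpow_natCast,
        ← Real.rpow_natCast, ← Real.rpow_natCast, ← Real.rpow_mul (by positivity),
        ← Real.rpow_mul (by positivity), ← Real.rpow_mul (by positivity), div_eq_mul_inv,
        ← Real.rpow_neg (by norm_num), mul_comm]
      congr 2 <;> push_cast <;> ring
    rw [← h4, ← sq_abs, ← mul_pow]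
    gcongr
  calc ∑ j ∈ Finset.range (n - 1), a j ^ 2
      ≤ ∑ j ∈ Finset.range (n - 1), M ^ 2 * (4 ^ (2 * e) * (((j : ℝ) + 1) ^ (-(4 * e)))) :=
        Finset.sum_le_sum h1
    _ = M ^ 2 * ∑ j ∈ Finset.range (n - 1), (4 ^ (2 * e) * (((j : ℝ) + 1) ^ (-(4 * e)))) := by
        rw [Finset.mul_sum]
    _ ≤ M ^ 2 * B := by
        gcongr
        exact hsum.sum_le_tsum _ (fun j _ => by positivity)
    _ ≤ ((B + 1) * M) ^ 2 := by
        have e1 := mul_nonneg (sq_nonneg M) hB0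
        have e2 := mul_nonneg (sq_nonneg M) (mul_nonneg hB0 hB0)
        nlinarith [sq_nonneg M]

lemma aux_exp (u q : ℝ) (hu : 0 < u) (hq0 : 0 ≤ q) (hq1 : q ≤ 1) :
    Real.exp (-u) ≤ u ^ (-q) := by
  rw [Real.exp_neg, Real.rpow_neg hu.le]
  have hp : 0 < u ^ q := by positivity
  apply inv_anti₀ hp
  have h1 := Real.add_one_le_exp u
  rcases le_total u 1 with h | h
  · have := Real.rpow_le_one hu.le h hq0
    linarith
  · have := Real.rpow_le_rpow_of_exponent_le h hq1
    rw [Real.rpow_one] at this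
    linarith

lemma aux_one_sub_exp (v b : ℝ) (hv : 0 ≤ v) (hb0 : 0 ≤ b) (hb1 : b ≤ 1) :
    1 - Real.exp (-v) ≤ v ^ b := by
  rcases le_total v 1 with h | h
  · have h1 := Real.add_one_le_exp (-v)
    rcases hv.eq_or_lt with h0 | h0
    · rw [← h0]; simp; positivity
    · have := Real.rpow_le_rpow_of_exponent_ge h0 h hb1
      rw [Real.rpow_one] at this
      linarith
  · have := Real.one_le_rpow h hb0
    have := Real.exp_pos (-v)
    linarith

lemma aux_sqrt : 0 ≤ Real.sqrt (2 / Real.pi) ∧ Real.sqrt (2 / Real.pi) ≤ 1 := by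
  refine ⟨Real.sqrt_nonneg _, ?_⟩
  rw [Real.sqrt_le_one, div_le_one Real.pi_pos]
  exact Real.two_le_pi

lemma aux_phiF_bound (j : ℕ) (x : ℝ) : |phiF j x| ≤ 1 := by
  unfold phiF
  rw [abs_mul, abs_of_nonneg aux_sqrt.1]
  exact mul_le_one₀ aux_sqrt.2 (abs_nonneg _) (Real.abs_sin_le_one _)

lemma aux_phiF_lip (j : ℕ) (x y : ℝ) : |phiF j x - phiF j y| ≤ j * |x - y| := by
  unfold phiF
  rw [← mul_sub, abs_mul, abs_of_nonneg aux_sqrt.1]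
  have h : |Real.sin (j * x) - Real.sin (j * y)| ≤ |(j : ℝ) * x - j * y| := by
    have := Real.lipschitzWith_sin.dist_le_mul (j * x) (j * y)
    simpa [Real.dist_eq] using this
  rw [← mul_sub, abs_mul, Nat.abs_cast] at h
  calc _ ≤ 1 * |Real.sin (j * x) - Real.sin (j * y)| := by
        gcongr
        exact aux_sqrt.2
    _ ≤ _ := by rw [one_mul]; exact h

/-- Coordinates of a point in its cell. -/
lemma aux_cell (n : ℕ) (hn : 0 < n) (x : ℝ) : ∃ k : ℤ, ∃ θ : ℝ, 0 ≤ θ ∧ θ < 1 ∧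
    x = (k + θ) * (Real.pi / n) ∧ kap n x = k * (Real.pi / n) ∧ (n : ℝ) / Real.pi * (x - kap n x) = θ := by
  have hn' : (0 : ℝ) < n := by exact_mod_cast hn
  have hpi := Real.pi_pos
  have e : x = (x / (Real.pi / n)) * (Real.pi / n) := by field_simp
  refine ⟨⌊x / (Real.pi / n)⌋, Int.fract (x / (Real.pi / n)), Int.fract_nonneg _,
    Int.fract_lt_one _, ?_, ?_, ?_⟩
  · rw [Int.floor_add_fract]; exact e
  · unfold kap; ring
  · unfold kap Int.fract
    field_simp

lemma aux_phiIn_bound (n j : ℕ) (hn : 0 < n) (x : ℝ) : |phiIn n j x| ≤ 3 := by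
  obtain ⟨k, θ, h0, h1, hx, hk, hθ⟩ := aux_cell n hn x
  unfold phiIn
  rw [hθ]
  have a1 := abs_le.mp (aux_phiF_bound j (kap n x))
  have a2 := abs_le.mp (aux_phiF_bound j (kap n x + Real.pi / n))
  rw [abs_le]
  constructor <;> nlinarith

lemma aux_phiIn_lip (n j : ℕ) (hn : 0 < n) (x y : ℝ) :
    |phiIn n j x - phiIn n j y| ≤ j * |x - y| := by
  wlog hxy : x ≤ y generalizing x y
  · rw [abs_sub_comm, abs_sub_comm x]
    exact this y x (le_of_not_ge hxy)
  have hn' : (0 : ℝ) < n := by exact_mod_cast hn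
  have hh : 0 < Real.pi / n := by positivity
  obtain ⟨k, θ, h0, h1, hx, hk, hθ⟩ := aux_cell n hn x
  obtain ⟨l, η, g0, g1, hy, hl, hη⟩ := aux_cell n hn y
  unfold phiIn
  rw [hθ, hη, hk, hl]
  set H := Real.pi / n with hH
  have ek : (k : ℝ) * H + H = (k + 1) * H := by ring
  have el : (l : ℝ) * H + H = (l + 1) * H := by ring
  rw [ek, el]
  have hlipk := aux_phiF_lip j ((k + 1) * H) (k * H)
  have hlipl := aux_phiF_lip j ((l + 1) * H) (l * H)
  rw [show ((k : ℝ) + 1) * H - k * H = H by ring, abs_of_pos hh] at hlipk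
  rw [show ((l : ℝ) + 1) * H - l * H = H by ring, abs_of_pos hh] at hlipl
  have hj : (0 : ℝ) ≤ j := by positivity
  have hle : (k : ℝ) + θ ≤ l + η := by
    rw [hx, hy] at hxy
    exact le_of_mul_le_mul_right hxy hh
  rw [abs_sub_comm x, abs_of_nonneg (sub_nonneg.mpr hxy), hx, hy]
  have hkl : k ≤ l := by
    have : (k : ℝ) < l + 1 := by linarith
    have : k < l + 1 := by exact_mod_cast this
    omega
  rcases hkl.eq_or_lt with h | h
  · subst h
    have e : phiF j (k * H) + θ * (phiF j ((k + 1) * H) - phiF j (k * H))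
        - (phiF j (k * H) + η * (phiF j ((k + 1) * H) - phiF j (k * H)))
        = -(η - θ) * (phiF j ((k + 1) * H) - phiF j (k * H)) := by ring
    rw [e, abs_mul, abs_neg, abs_of_nonneg (by linarith)]
    have : (η - θ) * |phiF j ((k + 1) * H) - phiF j (k * H)| ≤ (η - θ) * (j * H) :=
      mul_le_mul_of_nonneg_left hlipk (by linarith)
    linarith
  · have hk1 : (k : ℝ) + 1 ≤ l := by exact_mod_cast h
    have hm := aux_phiF_lip j (l * H) ((k + 1) * H)
    rw [← sub_mul, abs_mul, abs_of_pos hh, abs_of_nonneg (by linarith : (0 : ℝ) ≤ l - (k + 1))] at hm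
    set A := phiF j ((k + 1) * H)
    set B := phiF j (k * H)
    set C := phiF j ((l + 1) * H)
    set D := phiF j (l * H)
    have e : B + θ * (A - B) - (D + η * (C - D))
      = -((1 - θ) * (A - B)) + (-(D - A)) + (-(η * (C - D))) := by ring
    rw [e]
    have b1 : |(1 - θ) * (A - B)| ≤ (1 - θ) * (j * H) := by
      rw [abs_mul, abs_of_nonneg (by linarith)]
      exact mul_le_mul_of_nonneg_left hlipk (by linarith)
    have b2 : |η * (C - D)| ≤ η * (j * H) := by
      rw [abs_mul, abs_of_nonneg g0]
      exact mul_le_mul_of_nonneg_left hlipl g0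
    have t := abs_add_three (-((1 - θ) * (A - B))) (-(D - A)) (-(η * (C - D)))
    rw [abs_neg, abs_neg, abs_neg] at t
    linarith

lemma aux_time_int (S γ : ℝ) (hγ : γ < 1) (a b : ℝ) :
    IntervalIntegrable (fun r => (S - r) ^ (-γ)) MeasureTheory.volume a b := by
  have := (intervalIntegral.intervalIntegrable_rpow' (a := S - a) (b := S - b) (r := -γ)
    (by linarith)).comp_sub_left S
  simpa using this

lemma aux_time_val (S γ : ℝ) (hγ : γ < 1) (a : ℝ) :
    ∫ r in a..S, (S - r) ^ (-γ) = (S - a) ^ (1 - γ) / (1 - γ) := by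
  rw [intervalIntegral.integral_comp_sub_left (fun u => u ^ (-γ)) S, sub_self,
    integral_rpow (Or.inl (by linarith)), Real.zero_rpow (by linarith), sub_zero]
  rw [show -γ + 1 = 1 - γ by ring]

lemma aux_exp_bound (m τ q : ℝ) (hm : 0 < m) (hτ : 0 < τ) (hq0 : 0 ≤ q) (hq1 : q ≤ 1) :
    Real.exp (-m ^ 2 * τ) ≤ m ^ (-(2 * q)) * τ ^ (-q) := by
  have h := aux_exp (m ^ 2 * τ) q (by positivity) hq0 hq1
  rw [Real.mul_rpow (by positivity) hτ.le, ← Real.rpow_natCast, ← Real.rpow_mul hm.le] at h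
  rw [show -(2 * q) = ((2 : ℕ) : ℝ) * -q by push_cast; ring]
  refine le_trans (le_of_eq ?_) h
  rw [Real.rpow_natCast, neg_mul]

lemma aux_coef2 (l τ β P : ℝ) (hl : 0 < |l|) (hτ : 0 < τ) (hβ0 : 0 ≤ β) (hβ1 : β ≤ 1)
    (hP : |P| ≤ 3) :
    |l * Real.exp (-l ^ 2 * τ) * P| ≤ 3 * τ ^ (-(1 - β)) * |l| ^ (-(1 - 2 * β)) := by
  rw [abs_mul, abs_mul, abs_of_pos (Real.exp_pos _), ← sq_abs]
  set m := |l|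
  have h := aux_exp_bound m τ (1 - β) hl hτ (by linarith) (by linarith)
  have e : m ^ (-(1 - 2 * β)) = m * m ^ (-(2 * (1 - β))) := by
    rw [show -(1 - 2 * β) = 1 + -(2 * (1 - β)) by ring, Real.rpow_add hl, Real.rpow_one]
  calc m * Real.exp (-m ^ 2 * τ) * |P|
      ≤ m * (m ^ (-(2 * (1 - β))) * τ ^ (-(1 - β))) * 3 := by gcongr
    _ = _ := by rw [e]; ring

lemma aux_coef1 (l τ δ β e P Q D : ℝ) (hl : 0 < |l|) (hτ : 0 < τ) (hδ : 0 < δ)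
    (hβ0 : 0 ≤ β) (hβ1 : β ≤ 1) (he0 : 0 ≤ e) (he1 : e ≤ 1 / 2) (he2 : e ≤ 1 - 2 * β)
    (hD : 0 ≤ D) (hQ : |Q| ≤ 3) (hPQ : |P - Q| ≤ 2 * |l| ^ (1 / 2 : ℝ) * D) :
    |l * Real.exp (-l ^ 2 * (τ + δ)) * P - l * Real.exp (-l ^ 2 * τ) * Q|
      ≤ (2 * D * τ ^ (-((3 / 2 + e) / 2)) + 3 * δ ^ β * τ ^ (-((1 + 2 * β + e) / 2)))
        * |l| ^ (-e) := by
  have e1 : l * Real.exp (-l ^ 2 * (τ + δ)) * P - l * Real.exp (-l ^ 2 * τ) * Q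
      = l * (Real.exp (-l ^ 2 * τ) * Real.exp (-(l ^ 2 * δ))) * (P - Q)
        + (-(l * Real.exp (-l ^ 2 * τ) * (1 - Real.exp (-(l ^ 2 * δ))) * Q)) := by
    rw [← Real.exp_add, mul_sub, ← sub_eq_zero]
    rw [show -l ^ 2 * (τ + δ) = -l ^ 2 * τ + -(l ^ 2 * δ) by ring, Real.exp_add]
    ring
  rw [e1]
  refine (abs_add_le _ _).trans ?_
  have hE1 : Real.exp (-(l ^ 2 * δ)) ≤ 1 := by
    rw [Real.exp_le_one_iff]
    have : 0 ≤ l ^ 2 * δ := by positivity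
    linarith
  rw [abs_neg, abs_mul, abs_mul, abs_mul, abs_mul, abs_mul, abs_mul, abs_of_pos (Real.exp_pos _),
    abs_of_pos (Real.exp_pos _), abs_of_nonneg (sub_nonneg.mpr hE1)]
  rw [← sq_abs l] at hE1 ⊢
  set m := |l|
  have hb := aux_exp_bound m τ ((3 / 2 + e) / 2) hl hτ (by linarith) (by linarith)
  have hc := aux_exp_bound m τ ((1 + 2 * β + e) / 2) hl hτ (by linarith) (by linarith)
  have hd := aux_one_sub_exp (m ^ 2 * δ) β (by positivity) hβ0 hβ1
  rw [Real.mul_rpow (by positivity) hδ.le, ← Real.rpow_natCast, ← Real.rpow_mul hl.le,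
    Real.rpow_natCast] at hd
  push_cast at hd
  have f1 : m ^ (-e) = m * m ^ (-(2 * ((3 / 2 + e) / 2))) * m ^ (1 / 2 : ℝ) := by
    rw [show -e = 1 + -(2 * ((3 / 2 + e) / 2)) + 1 / 2 by ring, Real.rpow_add hl,
      Real.rpow_add hl, Real.rpow_one]
  have f2 : m ^ (-e) = m * m ^ (-(2 * ((1 + 2 * β + e) / 2))) * m ^ (2 * β) := by
    rw [show -e = 1 + -(2 * ((1 + 2 * β + e) / 2)) + 2 * β by ring, Real.rpow_add hl,
      Real.rpow_add hl, Real.rpow_one]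
  rw [add_mul]
  refine add_le_add ?_ ?_
  · calc m * (Real.exp (-m ^ 2 * τ) * Real.exp (-(m ^ 2 * δ))) * |P - Q|
        ≤ m * ((m ^ (-(2 * ((3 / 2 + e) / 2))) * τ ^ (-((3 / 2 + e) / 2))) * 1)
          * (2 * m ^ (1 / 2 : ℝ) * D) := by gcongr
      _ = _ := by rw [f1]; ring
  · have h0 : 0 ≤ 1 - Real.exp (-(m ^ 2 * δ)) := sub_nonneg.mpr hE1
    calc m * Real.exp (-m ^ 2 * τ) * (1 - Real.exp (-(m ^ 2 * δ))) * |Q|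
        ≤ m * (m ^ (-(2 * ((1 + 2 * β + e) / 2))) * τ ^ (-((1 + 2 * β + e) / 2)))
          * (m ^ (2 * β) * δ ^ β) * 3 := by gcongr
      _ = _ := by rw [f2]; ring

lemma aux_lip_lam (n j : ℕ) (hj : j < n - 1) (x y : ℝ) :
    |phiIn n (j + 1) x - phiIn n (j + 1) y|
      ≤ 2 * |lamEig (j + 1) n| ^ (1 / 2 : ℝ) * |x - y| := by
  have h := aux_phiIn_lip n (j + 1) (by omega) x y
  have hl := aux_lam_lower n j hj
  rw [← Real.sqrt_eq_rpow]
  have h2 : ((j : ℝ) + 1) / 2 ≤ Real.sqrt |lamEig (j + 1) n| := by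
    apply Real.le_sqrt_of_sq_le
    refine le_trans (le_of_eq ?_) hl
    ring
  refine h.trans ?_
  gcongr
  push_cast
  linarith

lemma aux_first (β T : ℝ) (hβ0 : 0 < β) (hβ1 : β < 3 / 8) (hT : 0 < T) :
    ∃ C : ℝ, 0 < C ∧ ∀ n : ℕ, 2 ≤ n → ∀ x y s t : ℝ, 0 ≤ s → s < t → t ≤ T →
      (∫ r in (0:ℝ)..s, ∫ z in (0:ℝ)..Real.pi, |DGn n (t - r) x z - DGn n (s - r) y z|)
            ≤ C * (|x - y| + (t - s) ^ β) := by
  set e : ℝ := 7 / 16 - β / 2 with he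
  obtain ⟨K, hK, hcore⟩ := aux_core e (by linarith)
  set γb : ℝ := (3 / 2 + e) / 2 with hγb
  set γc : ℝ := (1 + 2 * β + e) / 2 with hγc
  have hb1 : 0 < 1 - γb := by linarith
  have hc1 : 0 < 1 - γc := by linarith
  set Cb : ℝ := T ^ (1 - γb) / (1 - γb) with hCb
  set Cc : ℝ := T ^ (1 - γc) / (1 - γc) with hCc
  have hCb0 : 0 < Cb := by positivity
  have hCc0 : 0 < Cc := by positivity
  refine ⟨K * (2 * Cb + 3 * Cc), by positivity, ?_⟩
  intro n hn x y s t hs hst htT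
  have hδ : 0 < t - s := by linarith
  have hbound : ∀ᵐ r : ℝ, r ∈ Set.Ioc 0 s →
      ‖∫ z in (0:ℝ)..Real.pi, |DGn n (t - r) x z - DGn n (s - r) y z|‖
      ≤ K * (2 * |x - y|) * (s - r) ^ (-γb) + K * (3 * (t - s) ^ β) * (s - r) ^ (-γc) := by
    have hne : ∀ᵐ r : ℝ, r ≠ s := by simp [MeasureTheory.ae_iff]
    filter_upwards [hne] with r hr hr2
    have hτ : 0 < s - r := by
      have := lt_of_le_of_ne hr2.2 hr
      linarith
    rw [Real.norm_eq_abs, abs_of_nonneg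
      (intervalIntegral.integral_nonneg Real.pi_pos.le (fun _ _ => abs_nonneg _))]
    have heq : ∀ z, DGn n (t - r) x z - DGn n (s - r) y z
        = ∑ j ∈ Finset.range (n - 1),
          (lamEig (j + 1) n * Real.exp (-(lamEig (j + 1) n) ^ 2 * (s - r + (t - s)))
              * phiIn n (j + 1) x
            - lamEig (j + 1) n * Real.exp (-(lamEig (j + 1) n) ^ 2 * (s - r))
              * phiIn n (j + 1) y) * phiF (j + 1) (kap n z) := by
      intro z
      unfold DGn
      rw [← Finset.sum_sub_distrib]
      apply Finset.sum_congr rfl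
      intro j _
      rw [show s - r + (t - s) = t - r by ring]
      ring
    simp_rw [heq]
    have := hcore n hn (fun j => lamEig (j + 1) n
        * Real.exp (-(lamEig (j + 1) n) ^ 2 * (s - r + (t - s))) * phiIn n (j + 1) x
            - lamEig (j + 1) n * Real.exp (-(lamEig (j + 1) n) ^ 2 * (s - r))
              * phiIn n (j + 1) y)
      (2 * |x - y| * (s - r) ^ (-γb) + 3 * (t - s) ^ β * (s - r) ^ (-γc)) (by positivity)
      (by
        intro j hj
        have hl := aux_lam_lower n j hj
        exact aux_coef1 _ _ _ _ _ _ _ _ (lt_of_lt_of_le (by positivity) hl) hτ hδ hβ0.le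
          (by linarith) (by linarith) (by linarith) (by linarith) (abs_nonneg _)
          (aux_phiIn_bound n (j + 1) (by omega) y) (aux_lip_lam n j hj x y))
    refine this.trans (le_of_eq ?_)
    ring
  have i1 := (aux_time_int s γb (by linarith) 0 s).const_mul (K * (2 * |x - y|))
  have i2 := (aux_time_int s γc (by linarith) 0 s).const_mul (K * (3 * (t - s) ^ β))
  have h := intervalIntegral.norm_integral_le_of_norm_le hs hbound (i1.add i2)
  refine (le_trans (le_abs_self _) h).trans ?_
  rw [intervalIntegral.integral_add i1 i2, intervalIntegral.integral_const_mul,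
    intervalIntegral.integral_const_mul, aux_time_val s γb (by linarith) 0,
    aux_time_val s γc (by linarith) 0, sub_zero]
  have j1 : s ^ (1 - γb) / (1 - γb) ≤ Cb := by
    rw [hCb]; gcongr; linarith
  have j2 : s ^ (1 - γc) / (1 - γc) ≤ Cc := by
    rw [hCc]; gcongr; linarith
  have hp : 0 ≤ (t - s) ^ β := by positivity
  have hq : 0 ≤ |x - y| := abs_nonneg _
  calc _ ≤ K * (2 * |x - y|) * Cb + K * (3 * (t - s) ^ β) * Cc := by gcongr
    _ ≤ _ := by
      have k1 := mul_nonneg (mul_nonneg hK.le hp) hCb0.le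
      have k2 := mul_nonneg (mul_nonneg hK.le hq) hCc0.le
      nlinarith

lemma aux_second (β : ℝ) (hβ0 : 0 < β) (hβ1 : β < 3 / 8) :
    ∃ C : ℝ, 0 < C ∧ ∀ n : ℕ, 2 ≤ n → ∀ x s t : ℝ, s < t →
      (∫ r in s..t, ∫ z in (0:ℝ)..Real.pi, |DGn n (t - r) x z|) ≤ C * (t - s) ^ β := by
  obtain ⟨K, hK, hcore⟩ := aux_core (1 - 2 * β) (by linarith)
  refine ⟨K * 3 / β, by positivity, ?_⟩
  intro n hn x s t hst
  have hbound : ∀ᵐ r : ℝ, r ∈ Set.Ioc s t →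
      ‖∫ z in (0:ℝ)..Real.pi, |DGn n (t - r) x z|‖ ≤ K * 3 * (t - r) ^ (-(1 - β)) := by
    have hne : ∀ᵐ r : ℝ, r ≠ t := by simp [MeasureTheory.ae_iff]
    filter_upwards [hne] with r hr hr2
    have hτ : 0 < t - r := by
      have := lt_of_le_of_ne hr2.2 hr
      linarith
    rw [Real.norm_eq_abs, abs_of_nonneg
      (intervalIntegral.integral_nonneg Real.pi_pos.le (fun _ _ => abs_nonneg _))]
    unfold DGn
    have := hcore n hn (fun j => lamEig (j + 1) n
        * Real.exp (-(lamEig (j + 1) n) ^ 2 * (t - r)) * phiIn n (j + 1) x)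
      (3 * (t - r) ^ (-(1 - β))) (by positivity)
      (by
        intro j hj
        have hl := aux_lam_lower n j hj
        exact aux_coef2 _ _ _ _ (lt_of_lt_of_le (by positivity) hl) hτ hβ0.le
          (by linarith) (aux_phiIn_bound n (j + 1) (by omega) x))
    refine this.trans (le_of_eq ?_)
    ring
  have i1 := (aux_time_int t (1 - β) (by linarith) s t).const_mul (K * 3)
  have h := intervalIntegral.norm_integral_le_of_norm_le hst.le hbound i1
  refine (le_trans (le_abs_self _) h).trans ?_
  rw [intervalIntegral.integral_const_mul, aux_time_val t (1 - β) (by linarith) s]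
  rw [show 1 - (1 - β) = β by ring]
  refine le_of_eq ?_
  ring

/-- For every `α ∈ (0,1)` and `T > 0` there is `C = C(α,T) > 0`, independent of `n`, such
that for all `n ≥ 2`, `x, y ∈ (0,π)`, `0 ≤ s < t ≤ T`:
`∫₀ˢ∫₀^π |Δ_nG^n_{t-r}(x,z) - Δ_nG^n_{s-r}(y,z)| dz dr ≤ C(|x-y| + (t-s)^{3α/8})` and
`∫ₛᵗ∫₀^π |Δ_nG^n_{t-r}(x,z)| dz dr ≤ C(t-s)^{3α/8}`. -/
theorem stmt15 (α T : ℝ) (hα : α ∈ Set.Ioo (0 : ℝ) 1) (hT : 0 < T) :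
    ∃ C : ℝ, 0 < C ∧ ∀ n : ℕ, 2 ≤ n →
      ∀ x ∈ Set.Ioo 0 Real.pi, ∀ y ∈ Set.Ioo 0 Real.pi, ∀ s t : ℝ, 0 ≤ s → s < t → t ≤ T →
        ((∫ r in (0:ℝ)..s, ∫ z in (0:ℝ)..Real.pi, |DGn n (t - r) x z - DGn n (s - r) y z|)
            ≤ C * (|x - y| + (t - s) ^ (3 * α / 8)))
        ∧ ((∫ r in s..t, ∫ z in (0:ℝ)..Real.pi, |DGn n (t - r) x z|)
            ≤ C * (t - s) ^ (3 * α / 8)) := by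
  obtain ⟨C1, h1, H1⟩ := aux_first (3 * α / 8) T (by linarith [hα.1]) (by linarith [hα.2]) hT
  obtain ⟨C2, h2, H2⟩ := aux_second (3 * α / 8) (by linarith [hα.1]) (by linarith [hα.2])
  refine ⟨C1 + C2, by positivity, ?_⟩
  intro n hn x _ y _ s t hs hst htT
  have hp : 0 ≤ (t - s) ^ (3 * α / 8) := Real.rpow_nonneg (by linarith) _
  have hq : 0 ≤ |x - y| := abs_nonneg _
  constructor
  · refine (H1 n hn x y s t hs hst htT).trans ?_
    gcongr
    linarith
  · refine (H2 n hn x s t hst).trans ?_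
    gcongr
    linarith
end
end
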